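/- Let n ≥ 2, let x_1 < x_2 < … < x_n and y_1, …, y_n be real numbers, let α ≥ 0 and ε ≥ 0. Let a ∈ ℝⁿ be a global minimizer of J_α, and for i = 1,…,n−1 let δ_i = arctan((a_{i+1} − a_i)/(x_{i+1} − x_i)) be the angle of inclination of the i-th link of the broken line to the Ox axis, and let ‖δ‖_∞ = max_{i=1,…,n−1} |δ_i|. If max_{i=1,…,n} |a_i − y_i| > α ε, then ‖δ‖_∞ > ε; i.e., whenever α < max_i |a_i − y_i| / ε (with ε > 0), the optimal broken line has some link whose inclination angle exceeds ε in absolute value. -/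

import Mathlib

/-!
Stationarity of `J_α` at the minimizer `a` in a direction `v` reads
`Σ 2 (a_j − y_j) v_j + α Σ sin δ_j (v_{j+1} − v_j) = 0` (`stationarity`), because the derivative of
`√(d² + h²)` in `d` is the sine of the angle of the link (`sin_linkAngle`). Taking `v = e_i` gives
`2 |a_i − y_i| ≤ α · max_j |sin δ_j| · Σ |v_{j+1} − v_j| ≤ 2 α max_j |δ_j|`, since the `i`-th vertex
meets at most two links and `|sin t| ≤ |t|`. Hence if all angles are at most `ε`, then all residuals
are at most `α ε`.
-/

open Finset in
/-- The discrete regularized least-squares functional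
`J_α(a) = Σ_{i=0}^{n-1} (y_i − a_i)² + α Σ_{i=0}^{n-2} √((a_{i+1} − a_i)² + (x_{i+1} − x_i)²)`
for the broken line with vertices `(x_i, a_i)`, `i = 0, …, n−1`. -/
noncomputable def J (n : ℕ) (α : ℝ) (x y a : ℕ → ℝ) : ℝ :=
  ∑ i ∈ range n, (y i - a i) ^ 2 +
    α * ∑ i ∈ range (n - 1), Real.sqrt ((a (i + 1) - a i) ^ 2 + (x (i + 1) - x i) ^ 2)

/-- The angle of inclination `δ_i = arctan((a_{i+1} − a_i)/(x_{i+1} − x_i))` of the `i`-th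
link of the broken line to the `Ox` axis, `i = 0, …, n−2`. -/
noncomputable def linkAngle (x a : ℕ → ℝ) (i : ℕ) : ℝ :=
  Real.arctan ((a (i + 1) - a i) / (x (i + 1) - x i))

open Finset

lemma sin_linkAngle (x a : ℕ → ℝ) (j : ℕ) (h : x j < x (j + 1)) :
    Real.sin (linkAngle x a j) =
      (a (j + 1) - a j) / Real.sqrt ((a (j + 1) - a j) ^ 2 + (x (j + 1) - x j) ^ 2) := by
  have hp : 0 < x (j + 1) - x j := sub_pos.mpr h
  unfold linkAngle
  rw [Real.sin_arctan]
  generalize a (j + 1) - a j = d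
  generalize x (j + 1) - x j = w at hp
  have hs : Real.sqrt (d ^ 2 + w ^ 2) = w * Real.sqrt (1 + (d / w) ^ 2) := by
    rw [show d ^ 2 + w ^ 2 = w ^ 2 * (1 + (d / w) ^ 2) by field_simp; ring,
      Real.sqrt_mul (sq_nonneg w), Real.sqrt_sq hp.le]
  rw [hs, div_div]

/-- The first variation of `J_α` at a global minimizer vanishes in every direction `v`. -/
lemma stationarity (n : ℕ) (x y : ℕ → ℝ) (hx : ∀ i, i + 1 < n → x i < x (i + 1)) (α : ℝ)
    (a : ℕ → ℝ) (ha : ∀ b : ℕ → ℝ, J n α x y a ≤ J n α x y b) (v : ℕ → ℝ) :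
    ∑ j ∈ range n, 2 * (a j - y j) * v j +
      α * ∑ j ∈ range (n - 1), Real.sin (linkAngle x a j) * (v (j + 1) - v j) = 0 := by
  have hlin : ∀ j, HasDerivAt (fun t : ℝ => a j + t * v j) (v j) 0 := fun j => by
    simpa using ((hasDerivAt_id (0 : ℝ)).mul_const (v j)).const_add (a j)
  have hd : HasDerivAt (fun t : ℝ => J n α x y (fun j => a j + t * v j))
      (∑ j ∈ range n, 2 * (a j - y j) * v j +
        α * ∑ j ∈ range (n - 1), Real.sin (linkAngle x a j) * (v (j + 1) - v j)) 0 := by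
    unfold J
    refine (HasDerivAt.fun_sum fun j _ => ?_).add
      ((HasDerivAt.fun_sum fun j hj => ?_).const_mul α)
    · refine (((hlin j).const_sub (y j)).fun_pow 2).congr_deriv ?_
      simp
      ring
    -- Distinct abscissae keep the radicand positive, so each link length is differentiable.
    · have hj' : x j < x (j + 1) := hx j (by have := mem_range.mp hj; omega)
      have hp : 0 < x (j + 1) - x j := sub_pos.mpr hj'
      have hq : 0 < (a (j + 1) - a j) ^ 2 + (x (j + 1) - x j) ^ 2 := by positivity
      refine ((((hlin (j + 1)).fun_sub (hlin j)).fun_pow 2).add_const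
        ((x (j + 1) - x j) ^ 2)).sqrt (by simpa using hq.ne') |>.congr_deriv ?_
      rw [sin_linkAngle x a j hj']
      have := (Real.sqrt_pos.mpr hq).ne'
      simp only [zero_mul, add_zero]
      field_simp
      norm_num
      ring
  refine IsLocalMin.hasDerivAt_eq_zero (Filter.Eventually.of_forall fun t => ?_) hd
  simpa using ha (fun j => a j + t * v j)

/-- The unit coordinate vector `e_i` has total variation at most `2`. -/
lemma sum_abs_sub_single_le (m i : ℕ) :
    ∑ j ∈ range m, |(Pi.single i 1 : ℕ → ℝ) (j + 1) - (Pi.single i 1 : ℕ → ℝ) j| ≤ 2 := by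
  have hnn : ∀ j, 0 ≤ (Pi.single i 1 : ℕ → ℝ) j := fun j => by
    rw [Pi.single_apply]; split_ifs <;> norm_num
  have hone : ∀ k, ∑ j ∈ range k, (Pi.single i 1 : ℕ → ℝ) j ≤ 1 := fun k => by
    simp only [Pi.single_apply, sum_ite_eq']
    split_ifs <;> norm_num
  have hsucc : ∑ j ∈ range m, (Pi.single i 1 : ℕ → ℝ) (j + 1) ≤ 1 := by
    have h := hone (m + 1)
    rw [sum_range_succ'] at h
    linarith [hnn 0]
  calc ∑ j ∈ range m, |(Pi.single i 1 : ℕ → ℝ) (j + 1) - (Pi.single i 1 : ℕ → ℝ) j|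
      ≤ ∑ j ∈ range m, ((Pi.single i 1 : ℕ → ℝ) (j + 1) + (Pi.single i 1 : ℕ → ℝ) j) :=
        sum_le_sum fun j _ => abs_le.mpr
          ⟨by linarith [hnn j, hnn (j + 1)], by linarith [hnn j, hnn (j + 1)]⟩
    _ ≤ 2 := by rw [sum_add_distrib]; linarith [hone m]

open Finset in
/-- at a global minimizer `a` of `J_α`, if `max_i |a_i − y_i| > α ε` then
`‖δ‖_∞ = max_j |δ_j| > ε`. -/
theorem max_angle_gt_of_residual_gt
    (n : ℕ) (hn : 2 ≤ n) (x y : ℕ → ℝ)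
    (hx : ∀ i, i + 1 < n → x i < x (i + 1))
    (α : ℝ) (hα : 0 ≤ α) (ε : ℝ) (hε : 0 ≤ ε)
    (a : ℕ → ℝ) (ha : ∀ b : ℕ → ℝ, J n α x y a ≤ J n α x y b)
    (hres : α * ε <
      (range n).sup' (Finset.nonempty_range_iff.mpr (by omega)) (fun i => |a i - y i|)) :
    ε < (range (n - 1)).sup' (Finset.nonempty_range_iff.mpr (by omega))
        (fun j => |linkAngle x a j|) := by
  by_contra! hle
  have hang : ∀ j ∈ range (n - 1), |linkAngle x a j| ≤ ε := fun j hj =>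
    (le_sup' (fun j => |linkAngle x a j|) hj).trans hle
  refine absurd hres (not_lt.mpr (sup'_le _ _ fun i hi => ?_))
  have hst := stationarity n x y hx α a ha (Pi.single i 1)
  have hfirst : ∑ j ∈ range n, 2 * (a j - y j) * (Pi.single i 1 : ℕ → ℝ) j =
      2 * (a i - y i) := by
    simp only [Pi.single_apply, mul_ite, mul_one, mul_zero, sum_ite_eq', hi, if_true]
  have hsum : |∑ j ∈ range (n - 1), Real.sin (linkAngle x a j) *
      ((Pi.single i 1 : ℕ → ℝ) (j + 1) - (Pi.single i 1 : ℕ → ℝ) j)| ≤ ε * 2 := by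
    refine (abs_sum_le_sum_abs _ _).trans
      (le_trans ?_ (mul_le_mul_of_nonneg_left (sum_abs_sub_single_le (n - 1) i) hε))
    rw [mul_sum]
    refine sum_le_sum fun j hj => ?_
    rw [abs_mul]
    exact mul_le_mul_of_nonneg_right (Real.abs_sin_le_abs.trans (hang j hj)) (abs_nonneg _)
  rw [hfirst] at hst
  obtain ⟨h1, h2⟩ := abs_le.mp hsum
  have h3 := mul_le_mul_of_nonneg_left h1 hα
  have h4 := mul_le_mul_of_nonneg_left h2 hα
  exact abs_le.mpr ⟨by linarith, by linarith⟩
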